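/- The intuitionistically valid formula (¬p ∨ ¬q) → ¬(p ∧ q), for distinct atoms p and q, is not N-valid. -/

import Mathlib

/-! ## Dialogical logic: formulas, statements, moves -/

/-- Propositional formulas, built from atoms (indexed by `ℕ`) and `¬`, `∧`, `∨`, `→`. -/
inductive Formula : Type
  | atom : ℕ → Formula
  | neg : Formula → Formula
  | conj : Formula → Formula → Formula
  | disj : Formula → Formula → Formula
  | impl : Formula → Formula → Formula
  deriving DecidableEq, Inhabited

/-- Statements: formulas together with the three symbolic attacks `∧_L`, `∧_R` and `?`. -/
inductive Statement : Type
  | form : Formula → Statement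
  | conjL : Statement  -- the symbolic attack ∧_L
  | conjR : Statement  -- the symbolic attack ∧_R
  | question : Statement   -- the symbolic attack ?
  deriving DecidableEq, Inhabited

/-- A formula is atomic iff it is an atom. -/
def Formula.isAtomic : Formula → Prop
  | .atom _ => True
  | _ => False

/-- A move of a dialogue: a statement together with a reference.  The reference is
`none` for the initial move, `some (m, true)` for an attack on the assertion made at
move `m`, and `some (m, false)` for a defense against the attack made at move `m`. -/
structure Move : Type where
  stmt : Statement
  ref : Option (ℕ × Bool)
  deriving DecidableEq, Inhabited

/-! ## Particle rules -/

/-- Particle rules, attacks: `Attacks a φ` holds when the statement `a` is an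
admissible attack against the assertion `φ`. -/
inductive Attacks : Statement → Formula → Prop
  | conjL (φ ψ : Formula) : Attacks .conjL (.conj φ ψ)
  | conjR (φ ψ : Formula) : Attacks .conjR (.conj φ ψ)
  | disj (φ ψ : Formula) : Attacks .question (.disj φ ψ)
  | impl (φ ψ : Formula) : Attacks (.form φ) (.impl φ ψ)
  | neg (φ : Formula) : Attacks (.form φ) (.neg φ)

/-- Particle rules, defenses: `Defends s a φ` holds when the statement `s` is an
admissible defense of the assertion `φ` against the attack `a`.  (A negation admits
no defense.) -/
inductive Defends : Statement → Statement → Formula → Prop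
  | conjL (φ ψ : Formula) : Defends (.form φ) .conjL (.conj φ ψ)
  | conjR (φ ψ : Formula) : Defends (.form ψ) .conjR (.conj φ ψ)
  | disjL (φ ψ : Formula) : Defends (.form φ) .question (.disj φ ψ)
  | disjR (φ ψ : Formula) : Defends (.form ψ) .question (.disj φ ψ)
  | impl (φ ψ : Formula) : Defends (.form ψ) (.form φ) (.impl φ ψ)

/-! ## Dialogues

A (finite stage of a) dialogue is modelled as a list of moves; the move at index `i`
is the `i`-th move, made by Proponent P if `i` is even and by Opponent O if `i` is odd. -/

/-- The skeletal dialogue conditions: move 0 is an assertion of a formula with no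
reference, and every later move is an attack on, or a defense against, a specified
earlier move of the other player, in accordance with the particle rules; only
non-atomic assertions may be attacked. -/
def IsDialogue (d : List Move) : Prop :=
  (∀ _ : 0 < d.length, d[0]!.ref = none ∧ ∃ φ : Formula, d[0]!.stmt = .form φ) ∧
  (∀ i : ℕ, 0 < i → i < d.length →
    ∃ (m : ℕ) (z : Bool), d[i]!.ref = some (m, z) ∧ m < i ∧ m % 2 ≠ i % 2 ∧
      (z = true →
        ∃ φ : Formula, d[m]!.stmt = .form φ ∧ ¬ φ.isAtomic ∧ Attacks d[i]!.stmt φ) ∧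
      (z = false →
        ∃ (k : ℕ) (φ : Formula), d[m]!.ref = some (k, true) ∧ k < m ∧
          d[k]!.stmt = .form φ ∧ Defends d[i]!.stmt d[m]!.stmt φ))

/-- Rule D10: P may assert an atomic formula only if O has asserted it earlier. -/
def RuleD10 (d : List Move) : Prop :=
  ∀ i < d.length, i % 2 = 0 → ∀ a : ℕ, d[i]!.stmt = .form (.atom a) →
    ∃ j < i, j % 2 = 1 ∧ d[j]!.stmt = .form (.atom a)

/-- Rule D13: each P-assertion may be attacked at most once. -/
def RuleD13 (d : List Move) : Prop :=
  ∀ m : ℕ, m % 2 = 0 → ∀ i < d.length, ∀ j < d.length,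
    d[i]!.ref = some (m, true) → d[j]!.ref = some (m, true) → i = j

/-- Rule E: O may only react (attack or defend) against the immediately preceding
P-move. -/
def RuleE (d : List Move) : Prop :=
  ∀ i < d.length, i % 2 = 1 → ∃ z : Bool, d[i]!.ref = some (i - 1, z)

/-- The rule set N = {D10, D13}. -/
def NRules (d : List Move) : Prop := RuleD10 d ∧ RuleD13 d

/-- The rule set CL = {D10, D13, E}. -/
def CLRules (d : List Move) : Prop := RuleD10 d ∧ RuleD13 d ∧ RuleE d

/-- A dialogue commences with `φ` when its initial move is P's assertion of `φ`. -/
def CommencesWith (φ : Formula) (d : List Move) : Prop :=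
  0 < d.length ∧ d[0]!.stmt = .form φ

/-- An `S`-dialogue for `φ` (for a rule set `S`): a dialogue commencing with `φ`
that obeys the structural rules `S`.  These are exactly the branches (identified
with their underlying move sequences) of the `S`-dialogue tree for `φ`. -/
def SDialogueFor (S : List Move → Prop) (φ : Formula) (d : List Move) : Prop :=
  IsDialogue d ∧ S d ∧ CommencesWith φ d

/-- P wins a finite `S`-dialogue for `φ`: it ends with a P-move (the last index,
`d.length - 1`, is even, i.e. `d.length` is odd) and it cannot be extended by any
legal further (O-)move. -/
def WinsFor (S : List Move → Prop) (φ : Formula) (d : List Move) : Prop :=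
  SDialogueFor S φ d ∧ d.length % 2 = 1 ∧ ∀ m : Move, ¬ SDialogueFor S φ (d ++ [m])

/-- An `S`-winning strategy for P for `φ`, modelled as a set `T` of `S`-dialogues for
`φ`: the nodes of a rooted subtree of the `S`-dialogue tree for `φ`, each node being
identified with the dialogue leading from the root to it.  The conditions state that
`T` is a nonempty, prefix-closed set of `S`-dialogues for `φ` (hence a rooted subtree
of the `S`-dialogue tree with the same root), that every branch of `T` is a finite
`S`-dialogue won by P (leaves are wins for P, and there is no infinite branch), that
every node at odd depth (an O-move) has exactly one child, and that every node at
even depth (a P-move) has the same children in `T` as in the full dialogue tree. -/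
structure IsWinningStrategy (S : List Move → Prop) (φ : Formula) (T : Set (List Move)) : Prop where
  nonempty : T.Nonempty
  dialogues : ∀ d ∈ T, SDialogueFor S φ d
  prefix_closed : ∀ d ∈ T, ∀ e : List Move, e <+: d → 0 < e.length → e ∈ T
  leaf_wins : ∀ d ∈ T, (∀ m : Move, d ++ [m] ∉ T) → WinsFor S φ d
  no_infinite_branch : ∀ f : ℕ → Move, ∃ n : ℕ, 0 < n ∧ (List.ofFn fun i : Fin n => f i) ∉ T
  odd_unique_child : ∀ d ∈ T, 0 < d.length → d.length % 2 = 0 → ∃! m : Move, d ++ [m] ∈ T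
  even_all_children : ∀ d ∈ T, d.length % 2 = 1 →
    ∀ m : Move, SDialogueFor S φ (d ++ [m]) → d ++ [m] ∈ T

/-- `φ` is `S`-valid iff P has an `S`-winning strategy for `φ`. -/
def SValid (S : List Move → Prop) (φ : Formula) : Prop :=
  ∃ T : Set (List Move), IsWinningStrategy S φ T

/-- `φ` is N-valid (`⊨_N φ`) iff P has an N-winning strategy for `φ`. -/
def NValid (φ : Formula) : Prop := SValid NRules φ

theorem getBang_append_lt (d : List Move) (m : Move) (i : ℕ) (h : i < d.length) :
    (d ++ [m])[i]! = d[i]! := by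
  have h' : i < (d ++ [m]).length := by simp; omega
  rw [getElem!_pos (d ++ [m]) i h', getElem!_pos d i h, List.getElem_append_left h]

theorem getBang_append_len (d : List Move) (m : Move) :
    (d ++ [m])[d.length]! = m := by
  have h' : d.length < (d ++ [m]).length := by simp
  rw [getElem!_pos (d ++ [m]) d.length h']
  simp

/-- Legal extension of an N-dialogue by an O-move. -/
theorem extend_legal {φ : Formula} {d : List Move} (hd : SDialogueFor NRules φ d)
    (hodd : d.length % 2 = 1) (s : Statement) (m : ℕ) (z : Bool)
    (hm : m < d.length) (hpar : m % 2 = 0)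
    (hatt : z = true → (∃ ψ : Formula, d[m]!.stmt = .form ψ ∧ ¬ ψ.isAtomic ∧ Attacks s ψ) ∧
      ∀ i < d.length, d[i]!.ref ≠ some (m, true))
    (hdef : z = false → ∃ (k : ℕ) (ψ : Formula), d[m]!.ref = some (k, true) ∧ k < m ∧
          d[k]!.stmt = .form ψ ∧ Defends s d[m]!.stmt ψ) :
    SDialogueFor NRules φ (d ++ [⟨s, some (m, z)⟩]) := by
  obtain ⟨⟨h0, h1⟩, ⟨h10, h13⟩, hc0, hc1⟩ := hd
  have lt := getBang_append_lt d ⟨s, some (m, z)⟩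
  have eq := getBang_append_len d ⟨s, some (m, z)⟩
  have len : (d ++ [(⟨s, some (m, z)⟩ : Move)]).length = d.length + 1 := by simp
  refine ⟨⟨?_, ?_⟩, ⟨?_, ?_⟩, ?_, ?_⟩
  · intro _
    rw [lt 0 hc0]
    exact h0 hc0
  · intro i hi hil
    rw [len] at hil
    rcases Nat.lt_succ_iff_lt_or_eq.mp hil with h | h
    · obtain ⟨m', z', a, b, c, e, f⟩ := h1 i hi h
      refine ⟨m', z', ?_, b, c, ?_, ?_⟩
      · rw [lt i h]; exact a
      · rw [lt i h, lt m' (by omega)]; exact e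
      · intro hz
        obtain ⟨k, ψ, a1, a2, a3, a4⟩ := f hz
        refine ⟨k, ψ, ?_, a2, ?_, ?_⟩
        · rw [lt m' (by omega)]; exact a1
        · rw [lt k (by omega)]; exact a3
        · rw [lt i h, lt m' (by omega)]; exact a4
    · subst h
      refine ⟨m, z, ?_, hm, by omega, ?_, ?_⟩
      · rw [eq]
      · intro hz
        rw [eq, lt m hm]
        exact (hatt hz).1
      · intro hz
        obtain ⟨k, ψ, a1, a2, a3, a4⟩ := hdef hz
        refine ⟨k, ψ, ?_, a2, ?_, ?_⟩
        · rw [lt m hm]; exact a1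
        · rw [lt k (by omega)]; exact a3
        · rw [eq, lt m hm]; exact a4
  · intro i hi hev a ha
    rw [len] at hi
    have h : i < d.length := by
      rcases Nat.lt_succ_iff_lt_or_eq.mp hi with h | h <;> omega
    rw [lt i h] at ha
    obtain ⟨j, hj, hj2, hj3⟩ := h10 i h hev a ha
    exact ⟨j, hj, hj2, by rw [lt j (by omega)]; exact hj3⟩
  · intro n hn i hi j hj hri hrj
    rw [len] at hi hj
    rcases Nat.lt_succ_iff_lt_or_eq.mp hi with h | h <;>
      rcases Nat.lt_succ_iff_lt_or_eq.mp hj with h' | h'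
    · rw [lt i h] at hri
      rw [lt j h'] at hrj
      exact h13 n hn i h j h' hri hrj
    · subst h'
      rw [lt i h] at hri
      rw [eq] at hrj
      simp only [Option.some.injEq, Prod.mk.injEq] at hrj
      obtain ⟨rfl, hz⟩ := hrj
      exact absurd hri ((hatt hz).2 i h)
    · subst h
      rw [lt j h'] at hrj
      rw [eq] at hri
      simp only [Option.some.injEq, Prod.mk.injEq] at hri
      obtain ⟨rfl, hz⟩ := hri
      exact absurd hrj ((hatt hz).2 j h')
    · omega
  · rw [len]; omega
  · rw [lt 0 hc0]; exact hc1

/-- A strategy tree cannot contain a nonempty family closed under one-step extension. -/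
theorem no_endless {S : List Move → Prop} {φ : Formula} {T : Set (List Move)}
    (hT : IsWinningStrategy S φ T) (G : List Move → Prop)
    (r : Move) (hr : G [r]) (hGT : ∀ d, G d → d ∈ T)
    (hstep : ∀ d, G d → ∃ m, G (d ++ [m])) : False := by
  classical
  choose! step hs using hstep
  let D : ℕ → List Move := fun n => Nat.rec [r] (fun _ d => d ++ [step d]) n
  have hD : ∀ n, G (D n) := by
    intro n
    induction n with
    | zero => exact hr
    | succ n ih => exact hs _ ih
  let f : ℕ → Move := fun n => match n with
    | 0 => r
    | n + 1 => step (D n)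
  have hf : ∀ n, (List.ofFn fun i : Fin (n + 1) => f i) = D n := by
    intro n
    induction n with
    | zero => simp [f, D]
    | succ n ih =>
      rw [List.ofFn_succ', List.concat_eq_append]
      have : D (n + 1) = D n ++ [step (D n)] := rfl
      rw [this]
      exact congrArg (fun l => l ++ [step (D n)]) ih
  obtain ⟨n, hn, hnT⟩ := hT.no_infinite_branch f
  obtain ⟨k, rfl⟩ : ∃ k, n = k + 1 := ⟨n - 1, by omega⟩
  rw [hf k] at hnT
  exact hnT (hGT _ (hD k))

/-- Some P-move of `d` is a symbolic attack. -/
def SymInv (d : List Move) : Prop :=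
  ∃ i < d.length, i % 2 = 0 ∧ ∀ ψ, d[i]!.stmt ≠ .form ψ

/-- So far only the formulas `F`, `N` asserted by P and `D`, `C` used by O as attacks. -/
def PlainInv (F N D C : Formula) (d : List Move) : Prop :=
  ∀ i < d.length, (i % 2 = 0 → d[i]!.stmt = .form F ∨ d[i]!.stmt = .form N) ∧
    (i % 2 = 1 → (∃ k, k % 2 = 0 ∧ d[i]!.ref = some (k, true)) ∧
      (d[i]!.stmt = .form D ∨ d[i]!.stmt = .form C))

theorem SymInv.append {d : List Move} (h : SymInv d) (m : Move) : SymInv (d ++ [m]) := by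
  obtain ⟨i, hi, he, hs⟩ := h
  exact ⟨i, by simp; omega, he, by rw [getBang_append_lt _ _ _ hi]; exact hs⟩

theorem PlainInv.append {F N D C : Formula} {d : List Move} (h : PlainInv F N D C d) (m : Move)
    (he : d.length % 2 = 0 → m.stmt = .form F ∨ m.stmt = .form N)
    (ho : d.length % 2 = 1 → (∃ k, k % 2 = 0 ∧ m.ref = some (k, true)) ∧
      (m.stmt = .form D ∨ m.stmt = .form C)) : PlainInv F N D C (d ++ [m]) := by
  intro i hi
  have hi' : i < d.length + 1 := by simpa using hi
  rcases Nat.lt_succ_iff_lt_or_eq.mp hi' with h' | rfl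
  · rw [getBang_append_lt _ _ _ h']; exact h i h'
  · rw [getBang_append_len]; exact ⟨he, ho⟩

/-- Once P has made a symbolic attack, O can always defend against it. -/
theorem sym_move {φ : Formula} {d : List Move} (hd : SDialogueFor NRules φ d)
    (hodd : d.length % 2 = 1) (h : SymInv d) : ∃ m, SDialogueFor NRules φ (d ++ [m]) := by
  obtain ⟨i, hi, he, hs⟩ := h
  have hi0 : 0 < i := by
    rcases Nat.eq_zero_or_pos i with rfl | h
    · obtain ⟨_, ψ, hψ⟩ := hd.1.1 hi
      exact absurd hψ (hs ψ)
    · exact h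
  obtain ⟨m, z, hr, hmi, hpar, ha, hdf⟩ := hd.1.2 i hi0 hi
  cases z with
  | false =>
    obtain ⟨k, ψ, _, _, _, hD⟩ := hdf rfl
    generalize d[i]!.stmt = s at hD hs
    generalize d[m]!.stmt = s' at hD
    cases hD <;> exact absurd rfl (hs _)
  | true =>
    obtain ⟨ψ, hψ, _, hA⟩ := ha rfl
    have key : ∃ s, Defends s d[i]!.stmt ψ := by
      generalize d[i]!.stmt = s at hA hs
      cases hA with
      | conjL a b => exact ⟨_, .conjL a b⟩
      | conjR a b => exact ⟨_, .conjR a b⟩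
      | disj a b => exact ⟨_, .disjL a b⟩
      | impl a b => exact absurd rfl (hs _)
      | neg a => exact absurd rfl (hs _)
    obtain ⟨s, hsd⟩ := key
    exact ⟨_, extend_legal hd hodd s i false hi he (by simp)
      (fun _ => ⟨m, ψ, hr, hmi, hψ, hsd⟩)⟩

/-- The intuitionistically valid formula
`(¬p ∨ ¬q) → ¬(p ∧ q)`, for distinct atoms `p` and `q`, is not N-valid. -/
theorem de_morgan_converse_not_N_valid (p q : ℕ) (hpq : p ≠ q) :
    ¬ NValid (Formula.impl
        (Formula.disj (Formula.neg (Formula.atom p)) (Formula.neg (Formula.atom q)))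
        (Formula.neg (Formula.conj (Formula.atom p) (Formula.atom q)))) := by
  rintro ⟨T, hT⟩
  obtain ⟨C, hC⟩ : ∃ C, C = Formula.conj (Formula.atom p) (Formula.atom q) := ⟨_, rfl⟩
  obtain ⟨D, hD⟩ : ∃ D, D = Formula.disj (Formula.neg (Formula.atom p))
    (Formula.neg (Formula.atom q)) := ⟨_, rfl⟩
  rw [← hC, ← hD] at hT
  obtain ⟨d, hdT⟩ := hT.nonempty
  have hd := hT.dialogues d hdT
  cases d with
  | nil => exact absurd hd.2.2.1 (by simp)
  | cons r t =>
  have hrT : [r] ∈ T := hT.prefix_closed _ hdT _ (by simp) (by simp)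
  have hrs : r.stmt = .form (D.impl C.neg) := by simpa using hd.2.2.2
  refine no_endless hT
    (fun d => d ∈ T ∧ 0 < d.length ∧ (SymInv d ∨ PlainInv (D.impl C.neg) C.neg D C d)) r
    ⟨hrT, by simp, Or.inr ?_⟩ (fun d h => h.1) ?_
  · intro i hi
    have : i = 0 := by simpa using hi
    subst this
    simp [hrs]
  · rintro d ⟨hdT, hpos, hinv⟩
    have hd := hT.dialogues d hdT
    rcases Nat.mod_two_eq_zero_or_one d.length with hev | hodd
    · obtain ⟨m, hm, _⟩ := hT.odd_unique_child d hdT hpos hev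
      refine ⟨m, hm, by simp, ?_⟩
      rcases hinv with hinv | hinv
      · exact Or.inl (hinv.append m)
      have hdm := hT.dialogues _ hm
      obtain ⟨n, z, hr, hn, hpar, ha, hdf⟩ := hdm.1.2 d.length hpos (by simp)
      rw [getBang_append_len, getBang_append_lt _ _ _ hn] at ha
      rw [getBang_append_len, getBang_append_lt _ _ _ hn] at hdf
      obtain ⟨⟨k', hk', hk2⟩, hst⟩ := (hinv n hn).2 (by omega)
      cases z with
      | true =>
        left
        obtain ⟨ψ, h1, _, h2⟩ := ha rfl
        refine ⟨d.length, by simp, hev, ?_⟩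
        rw [getBang_append_len]
        intro χ hχ
        rw [hχ] at h2
        rw [h1] at hst
        simp only [Statement.form.injEq] at hst
        rcases hst with rfl | rfl
        · rw [hD] at h2; cases h2
        · rw [hC] at h2; cases h2
      | false =>
        right
        refine hinv.append m (fun _ => Or.inr ?_) (by omega)
        obtain ⟨k, ψ, h1, h2, h3, h4⟩ := hdf rfl
        rw [hk2] at h1
        simp only [Option.some.injEq, Prod.mk.injEq, and_true] at h1
        subst h1
        rw [getBang_append_lt _ _ _ (by omega)] at h3
        have h5 := (hinv k' (by omega)).1 hk'
        rw [h3] at h5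
        simp only [Statement.form.injEq] at h5
        generalize m.stmt = s at h4
        generalize d[n]!.stmt = s' at h4
        rcases h5 with rfl | rfl
        · cases h4; rfl
        · cases h4
    · rcases hinv with hinv | hinv
      · obtain ⟨m, hm⟩ := sym_move hd hodd hinv
        exact ⟨m, hT.even_all_children d hdT hodd m hm, by simp, Or.inl (hinv.append m)⟩
      · have hno : ∀ i < d.length, d[i]!.ref ≠ some (d.length - 1, true) := by
          intro i hi hc
          rcases Nat.eq_zero_or_pos i with rfl | h
          · rw [(hd.1.1 hi).1] at hc; cases hc
          · obtain ⟨n, z, hr, hn, _⟩ := hd.1.2 i h hi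
            rw [hr] at hc
            simp only [Option.some.injEq, Prod.mk.injEq] at hc
            omega
        have key : ∃ s, (s = .form D ∨ s = .form C) ∧ ∃ ψ : Formula,
            d[d.length - 1]!.stmt = .form ψ ∧ ¬ ψ.isAtomic ∧ Attacks s ψ := by
          rcases (hinv (d.length - 1) (by omega)).1 (by omega) with h | h
          · exact ⟨_, Or.inl rfl, _, h, by simp [Formula.isAtomic], .impl _ _⟩
          · exact ⟨_, Or.inr rfl, _, h, by simp [Formula.isAtomic], .neg _⟩
        obtain ⟨s, hs, hψ⟩ := key
        have hm := extend_legal hd hodd s (d.length - 1) true (by omega) (by omega)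
          (fun _ => ⟨hψ, hno⟩) (by simp)
        exact ⟨_, hT.even_all_children d hdT hodd _ hm, by simp,
          Or.inr (hinv.append _ (by omega) (fun _ => ⟨⟨d.length - 1, by omega, rfl⟩, hs⟩))⟩
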